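/- In an other-half-factorial domain, every good atom is a prime element. -/

import Mathlib

/-! The heart of the proof is `exists_associated_of_prod_eq`: if a good atom `x` occurs in one side
of an atomic equality, then an associate of `x` occurs in the other side. This is an induction on
the number of factors. An irredundant equality containing `x` is balanced because `x` is good, and
in an OHFD a balanced equality is trivial up to order and associates. A redundant equality splits,
up to a unit that can be absorbed into one atom, into two shorter equalities, one of which
contains `x`. Primality follows by factoring `a`, `b` and `c` in an equation `a * b = x * c`. -/

/-- An *atomic equality* `a₁⋯aₙ = b₁⋯bₘ` (n, m ≥ 1), encoded by two nonempty
multisets of irreducible elements with equal products. -/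
def IsAtomicEquality {A : Type*} [CommRing A] (s t : Multiset A) : Prop :=
  s ≠ 0 ∧ t ≠ 0 ∧ (∀ a ∈ s, Irreducible a) ∧ (∀ b ∈ t, Irreducible b) ∧ s.prod = t.prod

/-- The atomic equality given by `s` and `t` is *irredundant* if no product of a
nonempty proper sub-multiset of `s` is associated to a product of a nonempty proper
sub-multiset of `t`. -/
def IsIrredundant {A : Type*} [CommRing A] (s t : Multiset A) : Prop :=
  ∀ u v : Multiset A, u ≤ s → v ≤ t → u ≠ 0 → v ≠ 0 → u ≠ s → v ≠ t →
    ¬ Associated u.prod v.prod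

/-- A *bad atom* is an irreducible element appearing in some irredundant unbalanced
atomic equality. -/
def IsBadAtom {A : Type*} [CommRing A] (x : A) : Prop :=
  Irreducible x ∧ ∃ s t : Multiset A, IsAtomicEquality s t ∧ IsIrredundant s t ∧
    Multiset.card s ≠ Multiset.card t ∧ (x ∈ s ∨ x ∈ t)

/-- A *good atom* is an irreducible element that is not a bad atom. -/
def IsGoodAtom {A : Type*} [CommRing A] (x : A) : Prop :=
  Irreducible x ∧ ¬ IsBadAtom x

/-- A ring is *atomic* if every nonzero nonunit is a finite product of irreducible
elements. -/
def IsAtomicDomain (A : Type*) [CommRing A] : Prop :=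
  ∀ x : A, x ≠ 0 → ¬ IsUnit x → ∃ s : Multiset A, (∀ a ∈ s, Irreducible a) ∧ s.prod = x

/-- An *HF-element*: all its factorizations into irreducible elements have the same
number of factors. -/
def IsHFElement {A : Type*} [CommRing A] (x : A) : Prop :=
  ∀ s t : Multiset A, (∀ a ∈ s, Irreducible a) → (∀ b ∈ t, Irreducible b) →
    s.prod = x → t.prod = x → Multiset.card s = Multiset.card t

/-- A *half-factorial domain*: an atomic domain in which every nonzero nonunit is an
HF-element. -/
def IsHFD (A : Type*) [CommRing A] : Prop :=
  IsAtomicDomain A ∧ ∀ x : A, x ≠ 0 → ¬ IsUnit x → IsHFElement x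

/-- An *other-half-factorial domain (OHFD)*: an atomic domain in which any two
factorizations into atoms of the same nonzero nonunit that are distinct up to order
and associates have different numbers of factors. Equivalently, two atomic
factorizations of the same nonzero nonunit with the same number of factors coincide
up to order and associates. -/
def IsOHFD (A : Type*) [CommRing A] : Prop :=
  IsAtomicDomain A ∧
    ∀ s t : Multiset A, (∀ a ∈ s, Irreducible a) → (∀ b ∈ t, Irreducible b) →
      s.prod = t.prod → s.prod ≠ 0 → ¬ IsUnit s.prod →
      Multiset.card s = Multiset.card t → Multiset.Rel Associated s t

/-- A unit can be absorbed into one factor, turning an association of products into an equality. -/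
lemma exists_prod_eq_of_associated {A : Type*} [CommRing A] {s t : Multiset A}
    (ht0 : t ≠ 0) (ht : ∀ b ∈ t, Irreducible b) (h : Associated s.prod t.prod) :
    ∃ t' : Multiset A, t' ≠ 0 ∧ (∀ b ∈ t', Irreducible b) ∧ s.prod = t'.prod ∧
      ∀ b ∈ t', ∃ c ∈ t, Associated b c := by
  obtain ⟨b, hb⟩ := Multiset.exists_mem_of_ne_zero ht0
  obtain ⟨r, rfl⟩ := Multiset.exists_cons_of_mem hb
  obtain ⟨w, hw⟩ := h.symm
  have hbw : Associated (b * w) b := (associated_mul_unit_right b (w : A) w.isUnit).symm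
  refine ⟨(b * w) ::ₘ r, Multiset.cons_ne_zero, ?_, ?_, ?_⟩
  · intro c hc
    rcases Multiset.mem_cons.1 hc with rfl | hc
    · exact hbw.symm.irreducible (ht b hb)
    · exact ht c (Multiset.mem_cons_of_mem hc)
  · rw [← hw, Multiset.prod_cons, Multiset.prod_cons]
    ring
  · intro c hc
    rcases Multiset.mem_cons.1 hc with rfl | hc
    · exact ⟨b, hb, hbw⟩
    · exact ⟨c, Multiset.mem_cons_of_mem hc, Associated.refl c⟩

lemma prod_ne_zero_of_irreducible {A : Type*} [CommRing A] [IsDomain A] {s : Multiset A}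
    (hs : ∀ a ∈ s, Irreducible a) : s.prod ≠ 0 :=
  Multiset.prod_ne_zero fun h => (hs 0 h).ne_zero rfl

lemma exists_associated_of_prod_eq {A : Type*} [CommRing A] [IsDomain A] (hA : IsOHFD A)
    {x : A} (hx : IsGoodAtom x) (n : ℕ) : ∀ s t : Multiset A, Multiset.card s = n → x ∈ s →
      t ≠ 0 → (∀ a ∈ s, Irreducible a) → (∀ b ∈ t, Irreducible b) → s.prod = t.prod →
      ∃ b ∈ t, Associated x b := by
  classical
  induction n using Nat.strong_induction_on with
  | _ n ih =>
  intro s t hn hxs ht0 hs ht hst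
  have hs0 : s ≠ 0 := by
    rintro rfl
    simp at hxs
  by_cases hirr : IsIrredundant s t
  · have hcard : Multiset.card s = Multiset.card t := by
      by_contra hne
      exact hx.2 ⟨hx.1, s, t, ⟨hs0, ht0, hs, ht, hst⟩, hirr, hne, Or.inl hxs⟩
    have hnu : ¬ IsUnit s.prod := fun hu =>
      hx.1.not_isUnit (isUnit_of_dvd_unit (Multiset.dvd_prod hxs) hu)
    have hrel := hA.2 s t hs ht hst (prod_ne_zero_of_irreducible hs) hnu hcard
    exact Multiset.exists_mem_of_rel_of_mem hrel hxs
  · unfold IsIrredundant at hirr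
    push Not at hirr
    obtain ⟨u, v, hu, hv, hu0, hv0, hus, hvt, huv⟩ := hirr
    obtain ⟨u', rfl⟩ := Multiset.le_iff_exists_add.1 hu
    obtain ⟨v', rfl⟩ := Multiset.le_iff_exists_add.1 hv
    have hu'0 : u' ≠ 0 := by
      rintro rfl
      simp at hus
    have hv'0 : v' ≠ 0 := by
      rintro rfl
      simp at hvt
    have hcu := Multiset.card_pos.2 hu0
    have hcu' := Multiset.card_pos.2 hu'0
    rw [Multiset.card_add] at hn
    simp only [Multiset.mem_add, or_imp, forall_and] at hs ht hxs
    rw [Multiset.prod_add, Multiset.prod_add] at hst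
    have huv' : Associated u'.prod v'.prod :=
      Associated.of_mul_left (Associated.of_eq hst) huv (prod_ne_zero_of_irreducible hs.1)
    rcases hxs with hxu | hxu
    · obtain ⟨r, hr0, hr, hpr, hrv⟩ := exists_prod_eq_of_associated hv0 ht.1 huv
      obtain ⟨b, hb, hxb⟩ := ih _ (by omega) u r rfl hxu hr0 hs.1 hr hpr
      obtain ⟨c, hc, hbc⟩ := hrv b hb
      exact ⟨c, Multiset.mem_add.2 (Or.inl hc), hxb.trans hbc⟩
    · obtain ⟨r, hr0, hr, hpr, hrv⟩ := exists_prod_eq_of_associated hv'0 ht.2 huv'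
      obtain ⟨b, hb, hxb⟩ := ih _ (by omega) u' r rfl hxu hr0 hs.2 hr hpr
      obtain ⟨c, hc, hbc⟩ := hrv b hb
      exact ⟨c, Multiset.mem_add.2 (Or.inr hc), hxb.trans hbc⟩

/-- Allowing association instead of equality covers units as well, by the empty product. -/
lemma exists_associated_prod {A : Type*} [CommRing A] (hA : IsAtomicDomain A) {a : A}
    (ha : a ≠ 0) : ∃ s : Multiset A, (∀ b ∈ s, Irreducible b) ∧ Associated s.prod a := by
  by_cases hu : IsUnit a
  · exact ⟨0, by simp, by simpa using (associated_one_iff_isUnit.2 hu).symm⟩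
  · obtain ⟨s, hs, h⟩ := hA a ha hu
    exact ⟨s, hs, Associated.of_eq h⟩

/-- In an other-half-factorial domain, every good atom is a prime element. -/
theorem stmt_12 {A : Type*} [CommRing A] [IsDomain A] (hA : IsOHFD A)
    (x : A) (hx : IsGoodAtom x) : Prime x := by
  refine ⟨hx.1.ne_zero, hx.1.not_isUnit, ?_⟩
  rintro a b ⟨c, hc⟩
  by_cases ha : a = 0
  · exact Or.inl (ha ▸ dvd_zero x)
  by_cases hb : b = 0
  · exact Or.inr (hb ▸ dvd_zero x)
  have hc0 : c ≠ 0 := by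
    rintro rfl
    rw [mul_zero] at hc
    exact mul_ne_zero ha hb hc
  obtain ⟨fa, hfa, hpa⟩ := exists_associated_prod hA.1 ha
  obtain ⟨fb, hfb, hpb⟩ := exists_associated_prod hA.1 hb
  obtain ⟨fc, hfc, hpc⟩ := exists_associated_prod hA.1 hc0
  have hs : ∀ a ∈ x ::ₘ fc, Irreducible a := by
    intro d hd
    rcases Multiset.mem_cons.1 hd with rfl | hd
    exacts [hx.1, hfc d hd]
  have ht : ∀ d ∈ fa + fb, Irreducible d := by
    intro d hd
    rcases Multiset.mem_add.1 hd with hd | hd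
    exacts [hfa d hd, hfb d hd]
  have hassoc : Associated (x ::ₘ fc).prod (fa + fb).prod := by
    rw [Multiset.prod_cons, Multiset.prod_add]
    exact ((hpc.mul_left x).trans (Associated.of_eq hc.symm)).trans (hpa.mul_mul hpb).symm
  have ht0 : fa + fb ≠ 0 := by
    intro h0
    rw [h0, Multiset.prod_zero, associated_one_iff_isUnit, Multiset.prod_cons] at hassoc
    exact hx.1.not_isUnit (isUnit_of_mul_isUnit_left hassoc)
  obtain ⟨r, hr0, hr, hpr, hrt⟩ := exists_prod_eq_of_associated ht0 ht hassoc
  obtain ⟨d, hd, hxd⟩ := exists_associated_of_prod_eq hA hx _ _ r rfl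
    (Multiset.mem_cons_self x fc) hr0 hs hr hpr
  obtain ⟨e, he, hde⟩ := hrt d hd
  have hxe : x ∣ e := (hxd.trans hde).dvd
  rcases Multiset.mem_add.1 he with he | he
  · exact Or.inl (hxe.trans ((Multiset.dvd_prod he).trans hpa.dvd))
  · exact Or.inr (hxe.trans ((Multiset.dvd_prod he).trans hpb.dvd))
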